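/- arXiv:2601.21580 — 5 statements merged into one kernel-verified Lean document; each statement's English description precedes it below -/
import Mathlib

section
/- Let G be a finite connected simple graph with at least three vertices and maximum degree Δ(G). Then the minimum cardinality Ψ(L(G)) of a doubly resolving set of the line graph L(G) satisfies Ψ(L(G)) ≥ ⌈log₂(1 + Δ(G))⌉. -/
open SimpleGraph

variable {V : Type*}

/-- `S` is a doubly resolving set of `G`: every pair of distinct vertices is doubly
resolved by some pair of vertices of `S`. -/
def IsDoublyResolvingSet (G : SimpleGraph V) (S : Set V) : Prop :=
  ∀ u v : V, u ≠ v → ∃ x ∈ S, ∃ y ∈ S,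
    (G.dist u x : ℤ) - (G.dist u y : ℤ) ≠ (G.dist v x : ℤ) - (G.dist v y : ℤ)

/-- `Ψ(G)`: the minimum cardinality of a doubly resolving set of `G`. -/
noncomputable def psi (G : SimpleGraph V) : ℕ :=
  sInf {n | ∃ S : Set V, IsDoublyResolvingSet G S ∧ S.ncard = n}

/-- The degree of a vertex, as the cardinality of its neighbor set. -/
noncomputable def deg (G : SimpleGraph V) (v : V) : ℕ := (G.neighborSet v).ncard

/-- The maximum degree `Δ(G)`. -/
noncomputable def maxDeg (G : SimpleGraph V) : ℕ := sSup (Set.range (deg G))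

/-!
The edges at a vertex of `G` form a clique of `L(G)`, so it suffices to bound the cliques `K` of a
graph `H` with a doubly resolving set `S`. The distances from the vertices of `K` to a fixed
`x ∈ S` take at most two values, the smaller of which is the distance from `K` to `x`. Hence a
vertex `a ∈ K` is determined by the set of those `x ∈ S` for which `a` is nearest in `K`. The sets
`∅` and `S` cannot both arise: the distances to `S` of the two vertices in question would differ by
the constant `1`, so the two would not be doubly resolved. Therefore `|K| ≤ 2 ^ |S| - 1`.
-/

section DoublyResolving

variable {H : SimpleGraph V} {K S : Set V} {a b x : V}

namespace IsDoublyResolvingSet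

theorem eq_of_forall_dist_eq_add (hS : IsDoublyResolvingSet H S) (c : ℕ)
    (h : ∀ x ∈ S, H.dist b x = H.dist a x + c) : a = b := by
  by_contra hab
  obtain ⟨x, hx, y, hy, hxy⟩ := hS a b hab
  rw [h x hx, h y hy] at hxy
  lia

theorem nonempty [Nontrivial V] (hS : IsDoublyResolvingSet H S) : S.Nonempty := by
  obtain ⟨u, v, huv⟩ := exists_pair_ne V
  obtain ⟨x, hx, -⟩ := hS u v huv
  exact ⟨x, hx⟩

end IsDoublyResolvingSet

theorem isDoublyResolvingSet_univ (hH : H.Preconnected) : IsDoublyResolvingSet H Set.univ := by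
  intro u v huv
  have hpos : 0 < H.dist u v := (hH u v).pos_dist_of_ne huv
  refine ⟨u, Set.mem_univ u, v, Set.mem_univ v, ?_⟩
  rw [dist_self, dist_self, H.dist_comm (u := v)]
  lia

theorem exists_isDoublyResolvingSet_ncard_eq_psi (hH : H.Preconnected) :
    ∃ S : Set V, IsDoublyResolvingSet H S ∧ S.ncard = psi H :=
  Nat.sInf_mem (s := {n | ∃ S : Set V, IsDoublyResolvingSet H S ∧ S.ncard = n})
    ⟨_, Set.univ, isDoublyResolvingSet_univ hH, rfl⟩

theorem dist_le_dist_add_one_of_isClique (hK : H.IsClique K) (ha : a ∈ K) (hb : b ∈ K) (x : V) :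
    H.dist a x ≤ H.dist b x + 1 := by
  obtain rfl | hab := eq_or_ne a b
  · exact Nat.le_succ _
  · have hdiff := (hK hb ha hab.symm).diff_dist_adj (u := x)
    rw [H.dist_comm (u := a), H.dist_comm (u := b)]
    lia

/-- The vertices `x` of `S` to which no vertex of `K` is closer than `a` is. When `K` is a clique
and `a ∈ K`, this set records which of its two possible values the distance from `a` to each
`x ∈ S` takes. -/
def nearestLandmarks (H : SimpleGraph V) (K S : Set V) (a : V) : Set V :=
  {x ∈ S | ∀ b ∈ K, H.dist a x ≤ H.dist b x}

theorem nearestLandmarks_subset : nearestLandmarks H K S a ⊆ S :=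
  Set.sep_subset _ _

theorem exists_dist_lt_of_notMem_nearestLandmarks (hx : x ∈ S)
    (hxa : x ∉ nearestLandmarks H K S a) : ∃ b ∈ K, H.dist b x < H.dist a x := by
  by_contra! hle
  exact hxa ⟨hx, hle⟩

theorem dist_le_dist_of_nearestLandmarks_subset (hK : H.IsClique K) (ha : a ∈ K) (hb : b ∈ K)
    (hba : nearestLandmarks H K S b ⊆ nearestLandmarks H K S a) (hx : x ∈ S) :
    H.dist a x ≤ H.dist b x := by
  by_cases hxb : x ∈ nearestLandmarks H K S b
  · exact (hba hxb).2 b hb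
  · obtain ⟨c, hc, hcb⟩ := exists_dist_lt_of_notMem_nearestLandmarks hx hxb
    calc H.dist a x ≤ H.dist c x + 1 := dist_le_dist_add_one_of_isClique hK ha hc x
      _ ≤ H.dist b x := hcb

theorem dist_eq_dist_add_one_of_mem_of_notMem_nearestLandmarks (hK : H.IsClique K)
    (ha : a ∈ K) (hb : b ∈ K) (hxa : x ∈ nearestLandmarks H K S a)
    (hxb : x ∉ nearestLandmarks H K S b) : H.dist b x = H.dist a x + 1 := by
  obtain ⟨c, hc, hcb⟩ := exists_dist_lt_of_notMem_nearestLandmarks hxa.1 hxb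
  have hac : H.dist a x ≤ H.dist c x := hxa.2 c hc
  exact (dist_le_dist_add_one_of_isClique hK hb ha x).antisymm (by lia)

namespace IsDoublyResolvingSet

theorem injOn_nearestLandmarks (hS : IsDoublyResolvingSet H S) (hK : H.IsClique K) :
    Set.InjOn (nearestLandmarks H K S) K := fun _ ha _ hb hab ↦
  hS.eq_of_forall_dist_eq_add 0 fun _ hx ↦
    (dist_le_dist_of_nearestLandmarks_subset hK hb ha hab.le hx).antisymm
      (dist_le_dist_of_nearestLandmarks_subset hK ha hb hab.ge hx)

theorem nearestLandmarks_ne_empty_of_eq (hS : IsDoublyResolvingSet H S) (hne : S.Nonempty)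
    (hK : H.IsClique K) (ha : a ∈ K) (hb : b ∈ K) (haS : nearestLandmarks H K S a = S) :
    nearestLandmarks H K S b ≠ ∅ := by
  intro hbS
  have hab : a = b := hS.eq_of_forall_dist_eq_add 1 fun x hx ↦
    dist_eq_dist_add_one_of_mem_of_notMem_nearestLandmarks hK ha hb (haS.symm ▸ hx)
      (hbS ▸ Set.notMem_empty x)
  exact hne.ne_empty (by rw [← haS, hab, hbS])

theorem image_nearestLandmarks_ssubset_powerset (hS : IsDoublyResolvingSet H S)
    (hne : S.Nonempty) (hK : H.IsClique K) : nearestLandmarks H K S '' K ⊂ 𝒫 S := by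
  refine (Set.image_subset_iff.2 fun _ _ ↦ nearestLandmarks_subset).ssubset_of_not_subset ?_
  intro hsurj
  obtain ⟨a, ha, haS⟩ := hsurj (Set.mem_powerset subset_rfl)
  obtain ⟨b, hb, hbS⟩ := hsurj (Set.mem_powerset (Set.empty_subset S))
  exact hS.nearestLandmarks_ne_empty_of_eq hne hK ha hb haS hbS

theorem ncard_lt_two_pow_ncard_of_isClique (hS : IsDoublyResolvingSet H S) (hfin : S.Finite)
    (hne : S.Nonempty) (hK : H.IsClique K) : K.ncard < 2 ^ S.ncard :=
  calc K.ncard = (nearestLandmarks H K S '' K).ncard :=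
        (hS.injOn_nearestLandmarks hK).ncard_image.symm
    _ < (𝒫 S).ncard :=
        Set.ncard_lt_ncard (hS.image_nearestLandmarks_ssubset_powerset hne hK) hfin.powerset
    _ = 2 ^ S.ncard := Set.ncard_powerset S hfin

end IsDoublyResolvingSet

theorem clog_one_add_ncard_le_psi_of_isClique [Finite V] [Nontrivial V] (hH : H.Preconnected)
    (hK : H.IsClique K) : Nat.clog 2 (1 + K.ncard) ≤ psi H := by
  obtain ⟨S, hS, hcard⟩ := exists_isDoublyResolvingSet_ncard_eq_psi hH
  have hlt : K.ncard < 2 ^ S.ncard :=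
    hS.ncard_lt_two_pow_ncard_of_isClique S.toFinite hS.nonempty hK
  rw [← hcard, add_comm]
  exact Nat.clog_le_of_le_pow hlt

end DoublyResolving

section LineGraph

variable {G : SimpleGraph V}

theorem isClique_lineGraph_preimage_incidenceSet (v : V) :
    G.lineGraph.IsClique ((↑) ⁻¹' G.incidenceSet v) := fun _ he _ hf hef ↦
  lineGraph_adj_iff_exists.2 ⟨hef, v, he.2, hf.2⟩

theorem ncard_preimage_incidenceSet_eq_deg (v : V) :
    ((↑) ⁻¹' G.incidenceSet v : Set G.edgeSet).ncard = deg G v := by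
  classical
  calc ((↑) ⁻¹' G.incidenceSet v : Set G.edgeSet).ncard
      = (G.incidenceSet v).ncard :=
        Set.ncard_preimage_of_injective_subset_range Subtype.val_injective
          (by simpa only [Subtype.range_coe] using G.incidenceSet_subset v)
    _ = deg G v := Nat.card_congr (G.incidenceSetEquivNeighborSet v)

theorem reachable_lineGraph_of_mem {v : V} {e f : G.edgeSet} (he : v ∈ (e : Sym2 V))
    (hf : v ∈ (f : Sym2 V)) : G.lineGraph.Reachable e f := by
  obtain rfl | hef := eq_or_ne e f
  · exact .refl e
  · exact (lineGraph_adj_iff_exists.2 ⟨hef, v, he, hf⟩).reachable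

theorem reachable_lineGraph_of_reachable {u v : V} (huv : G.Reachable u v) {e f : G.edgeSet}
    (he : u ∈ (e : Sym2 V)) (hf : v ∈ (f : Sym2 V)) : G.lineGraph.Reachable e f := by
  obtain ⟨p⟩ := huv
  induction p generalizing e with
  | nil => exact reachable_lineGraph_of_mem he hf
  | @cons u w _ huw _ ih =>
    have hstep : G.lineGraph.Reachable e ⟨s(u, w), huw⟩ :=
      reachable_lineGraph_of_mem he (Sym2.mem_mk_left u w)
    exact hstep.trans (ih (Sym2.mem_mk_right u w) hf)

theorem preconnected_lineGraph (hG : G.Preconnected) : G.lineGraph.Preconnected := fun e f ↦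
  reachable_lineGraph_of_reachable (hG _ _) (Sym2.out_fst_mem e.1) (Sym2.out_fst_mem f.1)

theorem nontrivial_edgeSet (hG : G.Connected) (hcard : 3 ≤ Nat.card V) :
    Nontrivial G.edgeSet := by
  have hedges : Nat.card V ≤ Nat.card G.edgeSet + 1 := hG.card_vert_le_card_edgeSet_add_one
  have : Finite G.edgeSet := Nat.finite_of_card_ne_zero (by lia)
  exact Finite.one_lt_card_iff_nontrivial.1 (by lia)

theorem exists_deg_eq_maxDeg [Finite V] [Nonempty V] (G : SimpleGraph V) :
    ∃ v, deg G v = maxDeg G :=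
  Nat.sSup_mem (Set.range_nonempty (deg G)) (Set.finite_range (deg G)).bddAbove

end LineGraph

/-- For a finite connected simple graph `G` with at least three vertices,
`Ψ(L(G)) ≥ ⌈log₂ (1 + Δ(G))⌉`. -/
theorem psi_lineGraph_lower_bound {V : Type*} [Fintype V] (G : SimpleGraph V)
    (hconn : G.Connected) (hcard : 3 ≤ Fintype.card V) :
    Nat.clog 2 (1 + maxDeg G) ≤ psi G.lineGraph := by
  have := hconn.nonempty
  have : Nontrivial G.edgeSet := nontrivial_edgeSet hconn (by rwa [Nat.card_eq_fintype_card])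
  obtain ⟨v, hv⟩ := exists_deg_eq_maxDeg G
  rw [← hv, ← ncard_preimage_incidenceSet_eq_deg]
  exact clog_one_add_ncard_le_psi_of_isClique (preconnected_lineGraph hconn.preconnected)
    (isClique_lineGraph_preimage_incidenceSet v)
end

section
/- For every integer k ≥ 2, the maximum degree of the graph A_k equals k, i.e., Δ(A_k) = k. -/
open SimpleGraph

variable {V : Type*}

/-- Number of pendant paths in `A_k`: `m = ⌈log₂ (1 + k)⌉`. -/
def akM (k : ℕ) : ℕ := Nat.clog 2 (1 + k)

/-- The vertex set of the graph `A_k`: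
`{u} ∪ {v_1, …, v_k} ∪ {w_0, …, w_{m-1}} ∪ {w'_0, …, w'_{m-1}}`. -/
abbrev AkVert (k : ℕ) : Type := (Unit ⊕ Fin k) ⊕ (Fin (akM k) ⊕ Fin (akM k))

/-- The vertex `u` of `A_k`. -/
def akU (k : ℕ) : AkVert k := Sum.inl (Sum.inl ())

/-- The vertex `v_{j+1}` of `A_k` (for `j : Fin k`, representing `v_1, …, v_k`). -/
def akV (k : ℕ) (j : Fin k) : AkVert k := Sum.inl (Sum.inr j)

/-- The vertex `w_i` of `A_k`. -/
def akW (k : ℕ) (i : Fin (akM k)) : AkVert k := Sum.inr (Sum.inl i)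

/-- The vertex `w'_i` of `A_k`. -/
def akW' (k : ℕ) (i : Fin (akM k)) : AkVert k := Sum.inr (Sum.inr i)

/-- The graph `A_k`: edges are `u v_j` for `1 ≤ j ≤ k`; `v_j w_i` whenever the `i`-th binary
digit of `j` is `0` (i.e. `⌊j / 2^i⌋ mod 2 = 0`, with `j` the 1-based label); and `w_i w'_i`
for `0 ≤ i ≤ m - 1`. -/
def akGraph (k : ℕ) : SimpleGraph (AkVert k) := SimpleGraph.fromRel (fun a b =>
  (∃ j : Fin k, a = akU k ∧ b = akV k j) ∨
  (∃ (j : Fin k) (i : Fin (akM k)),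
      a = akV k j ∧ b = akW k i ∧ ((j.val + 1) / 2 ^ i.val) % 2 = 0) ∨
  (∃ i : Fin (akM k), a = akW k i ∧ b = akW' k i))

/-!
The vertex `u` has exactly the `k` neighbours `v_1, …, v_k`, so it suffices that no other degree
exceeds `k`. Since `1 ≤ j ≤ k < 2 ^ m`, some binary digit of `j` below the `m`-th is `1`, so `v_j`
misses at least one of the `m ≤ k` vertices `w_i`, which makes up for its neighbour `u`. Likewise
`w_i` misses `v_{2 ^ i}`, which makes up for its neighbour `w'_i`.
-/

theorem ncard_insert_image_le_card {ι α : Type*} [Finite ι] (a : α) (f : ι → α) {s : Set ι}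
    (hs : s ≠ Set.univ) : (insert a (f '' s)).ncard ≤ Nat.card ι :=
  calc (insert a (f '' s)).ncard
    _ ≤ (f '' s).ncard + 1 := Set.ncard_insert_le a (f '' s)
    _ ≤ s.ncard + 1 := Nat.add_le_add_right (Set.ncard_image_le s.toFinite) 1
    _ ≤ Nat.card ι := Set.ncard_lt_card hs

theorem lt_akM_iff {i k : ℕ} : i < akM k ↔ 2 ^ i ≤ k := by
  rw [akM, Nat.lt_clog_iff_pow_lt one_lt_two, Nat.lt_one_add_iff]

theorem akM_le_self (k : ℕ) : akM k ≤ k :=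
  not_lt.1 fun h => (lt_akM_iff.1 h).not_gt Nat.lt_two_pow_self

theorem exists_testBit_lt_akM {n k : ℕ} (hn : n ≠ 0) (hnk : n ≤ k) :
    ∃ i : Fin (akM k), n.testBit i = true := by
  obtain ⟨i, hi⟩ := Nat.exists_testBit_of_ne_zero hn
  exact ⟨⟨i, lt_akM_iff.2 ((Nat.ge_two_pow_of_testBit hi).trans hnk)⟩, hi⟩

section

variable (k : ℕ)

theorem neighborSet_akU : (akGraph k).neighborSet (akU k) = Set.range (akV k) := by
  ext ((_ | _) | (_ | _)) <;> simp [akGraph, akU, akV, akW, akW']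

theorem neighborSet_akV (j : Fin k) :
    (akGraph k).neighborSet (akV k j) =
      insert (akU k) (akW k '' {i | (j.val + 1).testBit i = false}) := by
  ext ((_ | _) | (_ | _)) <;>
    simp [akGraph, akU, akV, akW, akW', Nat.testBit_eq_decide_div_mod_eq]

theorem neighborSet_akW (i : Fin (akM k)) :
    (akGraph k).neighborSet (akW k i) =
      insert (akW' k i) (akV k '' {j | (j.val + 1).testBit i = false}) := by
  ext ((_ | _) | (_ | _)) <;>
    simp [akGraph, akU, akV, akW, akW', Nat.testBit_eq_decide_div_mod_eq, eq_comm (a := i)]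

theorem neighborSet_akW' (i : Fin (akM k)) :
    (akGraph k).neighborSet (akW' k i) = {akW k i} := by
  ext ((_ | _) | (_ | _)) <;> simp [akGraph, akU, akV, akW, akW', eq_comm (a := i)]

theorem deg_akU : deg (akGraph k) (akU k) = k := by
  have akV_injective : Function.Injective (akV k) := Sum.inl_injective.comp Sum.inr_injective
  rw [deg, neighborSet_akU, Set.ncard_range_of_injective akV_injective, Nat.card_fin]

theorem deg_akV_le (j : Fin k) : deg (akGraph k) (akV k j) ≤ akM k := by
  obtain ⟨i, hi⟩ := exists_testBit_lt_akM j.val.succ_ne_zero j.isLt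
  have not_all_zero : {i : Fin (akM k) | (j.val + 1).testBit i = false} ≠ Set.univ :=
    (Set.ne_univ_iff_exists_notMem _).2 ⟨i, by simpa using hi⟩
  rw [deg, neighborSet_akV]
  simpa only [Nat.card_fin] using ncard_insert_image_le_card (akU k) (akW k) not_all_zero

theorem deg_akW_le (i : Fin (akM k)) : deg (akGraph k) (akW k i) ≤ k := by
  obtain ⟨j, hj⟩ : ∃ j : Fin k, j.val + 1 = 2 ^ i.val :=
    have two_pow_pos : 0 < 2 ^ i.val := Nat.two_pow_pos i
    have two_pow_le : 2 ^ i.val ≤ k := lt_akM_iff.1 i.isLt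
    ⟨⟨2 ^ i.val - 1, by omega⟩, Nat.sub_add_cancel two_pow_pos⟩
  have not_all_zero : {j : Fin k | (j.val + 1).testBit i = false} ≠ Set.univ :=
    (Set.ne_univ_iff_exists_notMem _).2 ⟨j, by simp [hj]⟩
  rw [deg, neighborSet_akW]
  simpa only [Nat.card_fin] using ncard_insert_image_le_card (akW' k i) (akV k) not_all_zero

theorem deg_akW' (i : Fin (akM k)) : deg (akGraph k) (akW' k i) = 1 := by
  rw [deg, neighborSet_akW', Set.ncard_singleton]

theorem deg_akGraph_le (a : AkVert k) : deg (akGraph k) a ≤ k := by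
  rcases a with (_ | j) | (i | i)
  · exact (deg_akU k).le
  · exact (deg_akV_le k j).trans (akM_le_self k)
  · exact deg_akW_le k i
  · exact (deg_akW' k i).trans_le (i.pos.trans_le (akM_le_self k))

end

/-- For every integer `k ≥ 2`, the maximum degree of `A_k` equals `k`. -/
theorem maxDeg_akGraph (k : ℕ) (hk : 2 ≤ k) : maxDeg (akGraph k) = k := by
  have isGreatest_deg : IsGreatest (Set.range (deg (akGraph k))) k :=
    ⟨⟨akU k, deg_akU k⟩, Set.forall_mem_range.2 (deg_akGraph_le k)⟩
  exact isGreatest_deg.csSup_eq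
end

section
/- For every integer k ≥ 2, the set S = {w_0w'_0, w_1w'_1, …, w_{m−1}w'_{m−1}} of m pendant edges of the graph A_k, regarded as a set of vertices of the line graph L(A_k), is a doubly resolving set of L(A_k), where m = ⌈log₂(1+k)⌉. -/
open SimpleGraph

variable {V : Type*}

/-!
Write `d_i(e)` for the distance in `L(A_k)` from `e` to the pendant edge `w_i w'_i`. A set is doubly
resolving iff no two distinct vertices have distance profiles to it that differ by a constant. As
`w'_i` is a leaf, `d_i(e)` is the smaller of the distances in `A_k` from the two ends of `e` to
`w'_i`, and this gives

* `d_i(u v_j)` is `2` or `3`, according to the `i`-th binary digit of `j`;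
* `d_l(v_j w_l) = 1`, and for `i ≠ l`, `d_i(v_j w_l)` is `2` or at least `3`, according to the
  `i`-th digit of `j`;
* `d_l(w_l w'_l) = 0`, and for `i ≠ l`, `d_i(w_l w'_l)` is at least `3` and at least `d_i(v_j w_l)`.

Every `j` in `1, …, k` has a digit `1` among its `m` lowest digits and is determined by them, so the
shift between two profiles is pinned down by their extreme values, and the profiles then differ.
-/

section DoublyResolving

variable {G : SimpleGraph V} {ι : Type*} {x : ι → V} {u v : V}

/-- The distance profiles of `u` and `v` to the points `x i` differ by a constant, that is, no pair
`x i`, `x l` doubly resolves `u` and `v`. -/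
def IsDistTranslate (G : SimpleGraph V) (x : ι → V) (u v : V) : Prop :=
  ∃ c : ℤ, ∀ i, (G.dist u (x i) : ℤ) = G.dist v (x i) + c

theorem IsDistTranslate.symm (h : IsDistTranslate G x u v) : IsDistTranslate G x v u := by
  obtain ⟨c, hc⟩ := h
  exact ⟨-c, fun i => by rw [hc i]; ring⟩

theorem isDoublyResolvingSet_range_iff :
    IsDoublyResolvingSet G (Set.range x) ↔ ∀ u v, IsDistTranslate G x u v → u = v := by
  constructor
  · rintro h u v ⟨c, hc⟩
    by_contra hne
    obtain ⟨_, ⟨i, rfl⟩, _, ⟨l, rfl⟩, hil⟩ := h u v hne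
    exact hil (by rw [hc i, hc l]; ring)
  · intro h u v hne
    by_contra! hc
    refine hne (h u v ?_)
    rcases isEmpty_or_nonempty ι with _ | ⟨⟨l⟩⟩
    · exact ⟨0, isEmptyElim⟩
    · exact ⟨G.dist u (x l) - G.dist v (x l), fun i => by
        linarith [hc _ (Set.mem_range_self i) _ (Set.mem_range_self l)]⟩

end DoublyResolving

section LineGraph

variable {G : SimpleGraph V} {a b w z : V}

theorem le_add_length_of_forall_adj {f : V → ℕ} (hf : ∀ a b, G.Adj a b → f a ≤ f b + 1)
    (p : G.Walk a z) : f a ≤ f z + p.length := by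
  induction p with
  | nil => simp
  | cons hab p ih =>
    have := hf _ _ hab
    rw [Walk.length_cons]
    lia

theorem le_add_dist_of_forall_adj {f : V → ℕ} (hf : ∀ a b, G.Adj a b → f a ≤ f b + 1)
    (haz : G.Reachable a z) : f a ≤ f z + G.dist a z := by
  obtain ⟨p, hp⟩ := haz.exists_walk_length_eq_dist
  exact hp ▸ le_add_length_of_forall_adj hf p

theorem dist_le_dist_add_one_of_adj (hab : G.Adj a b) : G.dist a z ≤ G.dist b z + 1 := by
  rw [dist_comm (u := a), dist_comm (u := b)]
  have := hab.diff_dist_adj (u := z)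
  lia

theorem dist_lt_dist_of_forall_adj_eq (ha : ∀ b, G.Adj a b → b = w) (haz : G.Reachable a z)
    (hne : a ≠ z) : G.dist w z < G.dist a z := by
  obtain ⟨p, hp⟩ := haz.exists_walk_length_eq_dist
  cases p with
  | nil => exact absurd rfl hne
  | cons hab p =>
    obtain rfl := ha _ hab
    exact hp ▸ Nat.lt_succ_of_le (dist_le p)

theorem exists_lineGraph_walk_length_le (p : G.Walk a z) {e : G.edgeSet} (hae : a ∈ e.1) :
    ∃ f : G.edgeSet, z ∈ f.1 ∧ ∃ q : G.lineGraph.Walk e f, q.length ≤ p.length := by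
  induction p generalizing e with
  | nil => exact ⟨e, hae, .nil, le_rfl⟩
  | @cons a c z hac p ih =>
    obtain ⟨f, hzf, q, hq⟩ := ih (e := ⟨s(a, c), hac⟩) (Sym2.mem_mk_right a c)
    refine ⟨f, hzf, ?_⟩
    by_cases he : e = ⟨s(a, c), hac⟩
    · exact he ▸ ⟨q, hq.trans (Nat.le_succ _)⟩
    · have hadj : G.lineGraph.Adj e ⟨s(a, c), hac⟩ :=
        lineGraph_adj_iff_exists.2 ⟨he, a, hae, Sym2.mem_mk_left a c⟩
      exact ⟨.cons hadj q, Nat.succ_le_succ hq⟩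

theorem exists_lineGraph_walk_pendant_length_le (hwz : G.Adj w z)
    (hz : ∀ b, G.Adj z b → b = w) (p : G.Walk a z) {e : G.edgeSet} (hae : a ∈ e.1) :
    ∃ q : G.lineGraph.Walk e ⟨s(w, z), hwz⟩, q.length ≤ p.length := by
  obtain ⟨⟨f, hf⟩, hzf, hq⟩ := exists_lineGraph_walk_length_le p hae
  obtain ⟨b, rfl⟩ := Sym2.mem_iff_exists.1 hzf
  obtain rfl := hz b hf
  rwa [show (⟨s(z, b), hf⟩ : G.edgeSet) = ⟨s(b, z), hwz⟩ from Subtype.ext Sym2.eq_swap] at hq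

theorem lineGraph_dist_pendant_le (hwz : G.Adj w z) (hz : ∀ b, G.Adj z b → b = w)
    (haz : G.Reachable a z) {e : G.edgeSet} (hae : a ∈ e.1) :
    G.lineGraph.dist e ⟨s(w, z), hwz⟩ ≤ G.dist a z := by
  obtain ⟨p, hp⟩ := haz.exists_walk_length_eq_dist
  obtain ⟨q, hq⟩ := exists_lineGraph_walk_pendant_length_le hwz hz p hae
  exact (dist_le q).trans (hp ▸ hq)

/-- The distance from the edge `e` to the vertex `z`: the smaller of the distances from the two
ends of `e` to `z`. -/
noncomputable def edgeVertexDist (G : SimpleGraph V) (z : V) (e : Sym2 V) : ℕ :=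
  Sym2.lift ⟨fun a b => min (G.dist a z) (G.dist b z), fun _ _ => min_comm _ _⟩ e

theorem edgeVertexDist_mk : edgeVertexDist G z s(a, b) = min (G.dist a z) (G.dist b z) := rfl

theorem edgeVertexDist_le_add_one_of_lineGraph_adj {e f : G.edgeSet}
    (h : G.lineGraph.Adj e f) : edgeVertexDist G z e ≤ edgeVertexDist G z f + 1 := by
  obtain ⟨-, a, hae, haf⟩ := lineGraph_adj_iff_exists.1 h
  obtain ⟨e, he⟩ := e
  obtain ⟨f, hf⟩ := f
  obtain ⟨b, rfl⟩ := Sym2.mem_iff_exists.1 hae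
  obtain ⟨c, rfl⟩ := Sym2.mem_iff_exists.1 haf
  have hac : G.dist a z ≤ G.dist c z + 1 := dist_le_dist_add_one_of_adj hf
  simp only [edgeVertexDist_mk]
  lia

theorem lineGraph_dist_pendant (hab : G.Adj a b) (hwz : G.Adj w z)
    (hz : ∀ b, G.Adj z b → b = w) (haz : G.Reachable a z) :
    G.lineGraph.dist ⟨s(a, b), hab⟩ ⟨s(w, z), hwz⟩ = min (G.dist a z) (G.dist b z) := by
  apply le_antisymm
  · exact le_min (lineGraph_dist_pendant_le hwz hz haz (Sym2.mem_mk_left a b))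
      (lineGraph_dist_pendant_le hwz hz (hab.symm.reachable.trans haz) (Sym2.mem_mk_right a b))
  · obtain ⟨p⟩ := haz
    obtain ⟨q, -⟩ := exists_lineGraph_walk_pendant_length_le hwz hz p
      (e := ⟨s(a, b), hab⟩) (Sym2.mem_mk_left a b)
    have h := le_add_dist_of_forall_adj (f := fun e : G.edgeSet => edgeVertexDist G z e)
      (fun _ _ => edgeVertexDist_le_add_one_of_lineGraph_adj) q.reachable
    simpa only [edgeVertexDist_mk, dist_self, min_zero, zero_add] using h

end LineGraph

section Digits

theorem eq_of_testBit_eq_of_lt_two_pow {a b m : ℕ} (ha : a < 2 ^ m) (hb : b < 2 ^ m)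
    (h : ∀ i < m, a.testBit i = b.testBit i) : a = b := by
  refine Nat.eq_of_testBit_eq fun i => ?_
  rcases lt_or_ge i m with hi | hi
  · exact h i hi
  · have hmi : 2 ^ m ≤ 2 ^ i := Nat.pow_le_pow_right two_pos hi
    rw [Nat.testBit_lt_two_pow (ha.trans_le hmi), Nat.testBit_lt_two_pow (hb.trans_le hmi)]

variable {k : ℕ}

/-- The `i`-th binary digit of the label of `v_{j+1}`. The label is `j + 1`, as `Fin k` counts
from `0`. -/
def akDigit (k : ℕ) (j : Fin k) (i : Fin (akM k)) : Bool := (j.val + 1).testBit i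

theorem akDigit_eq_false_iff {j : Fin k} {i : Fin (akM k)} :
    akDigit k j i = false ↔ ((j.val + 1) / 2 ^ i.val) % 2 = 0 := by
  rw [akDigit, Nat.testBit_eq_decide_div_mod_eq, decide_eq_false_iff_not, ← ne_eq,
    Nat.mod_two_ne_one]

theorem one_add_le_two_pow_akM : 1 + k ≤ 2 ^ akM k := Nat.le_pow_clog one_lt_two _

theorem label_lt_two_pow_akM (j : Fin k) : j.val + 1 < 2 ^ akM k := by
  have := one_add_le_two_pow_akM (k := k)
  lia

theorem akDigit_injective : Function.Injective (akDigit k) := fun j j' h =>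
  Fin.ext <| Nat.succ_injective <|
    eq_of_testBit_eq_of_lt_two_pow (label_lt_two_pow_akM j) (label_lt_two_pow_akM j')
      fun i hi => congrFun h ⟨i, hi⟩

theorem exists_akDigit_eq_true (j : Fin k) : ∃ i, akDigit k j i = true := by
  by_contra! h
  refine Nat.succ_ne_zero j.val (eq_of_testBit_eq_of_lt_two_pow (label_lt_two_pow_akM j)
    (Nat.two_pow_pos _) fun i hi => ?_)
  rw [Nat.zero_testBit]
  exact Bool.eq_false_of_not_eq_true (h ⟨i, hi⟩)

theorem exists_akDigit_eq_false (hk : 2 ≤ k) (i : Fin (akM k)) : ∃ j, akDigit k j i = false := by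
  obtain ⟨_ | i, hi⟩ := i
  · exact ⟨⟨1, hk⟩, by simp [akDigit]⟩
  · exact ⟨⟨0, by lia⟩, Nat.testBit_lt_two_pow (Nat.one_lt_two_pow i.succ_ne_zero)⟩

theorem one_lt_akM (hk : 2 ≤ k) : 1 < akM k := (Nat.lt_clog_iff_pow_lt one_lt_two).2 (by lia)

theorem exists_ne_index (hk : 2 ≤ k) (l : Fin (akM k)) : ∃ i, i ≠ l :=
  have : Nontrivial (Fin (akM k)) := Fin.nontrivial_iff_two_le.2 (one_lt_akM hk)
  exists_ne l

end Digits

section AkGraph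

variable {k : ℕ} {j : Fin k} {i l : Fin (akM k)}

theorem akGraph_adj_akU_akV (j : Fin k) : (akGraph k).Adj (akU k) (akV k j) := by
  simp [akGraph, akU, akV]

theorem akGraph_adj_akV_akW (h : akDigit k j i = false) :
    (akGraph k).Adj (akV k j) (akW k i) := by
  simp [akGraph, akU, akV, akW, akDigit_eq_false_iff.1 h]

theorem akGraph_adj_akW_akW' (i : Fin (akM k)) : (akGraph k).Adj (akW k i) (akW' k i) := by
  simp [akGraph, akW, akW']

theorem akGraph_adj_induction {P : AkVert k → AkVert k → Prop} (symm : ∀ a b, P a b → P b a)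
    (uv : ∀ j, P (akU k) (akV k j))
    (vw : ∀ j i, akDigit k j i = false → P (akV k j) (akW k i))
    (ww' : ∀ i, P (akW k i) (akW' k i)) {a b : AkVert k} (h : (akGraph k).Adj a b) : P a b := by
  rw [akGraph, fromRel_adj] at h
  rcases h.2 with hab | hba
  · rcases hab with ⟨j, rfl, rfl⟩ | ⟨j, i, rfl, rfl, hji⟩ | ⟨i, rfl, rfl⟩
    exacts [uv j, vw j i (akDigit_eq_false_iff.2 hji), ww' i]
  · rcases hba with ⟨j, rfl, rfl⟩ | ⟨j, i, rfl, rfl, hji⟩ | ⟨i, rfl, rfl⟩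
    exacts [symm _ _ (uv j), symm _ _ (vw j i (akDigit_eq_false_iff.2 hji)), symm _ _ (ww' i)]

theorem eq_akW_of_adj_akW' {b : AkVert k} (h : (akGraph k).Adj (akW' k i) b) : b = akW k i := by
  have key : (akW' k i = akW' k i → b = akW k i) ∧ (b = akW' k i → akW' k i = akW k i) :=
    akGraph_adj_induction
      (P := fun a b => (a = akW' k i → b = akW k i) ∧ (b = akW' k i → a = akW k i))
      (fun _ _ => And.symm) (by simp [akU, akV, akW']) (by simp [akV, akW, akW'])
      (by simp [akW, akW']) h
  exact key.1 rfl

theorem akGraph_reachable_akU (hk : 2 ≤ k) (a : AkVert k) : (akGraph k).Reachable a (akU k) := by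
  have akV_reachable (j) : (akGraph k).Reachable (akV k j) (akU k) :=
    (akGraph_adj_akU_akV j).symm.reachable
  have akW_reachable (i) : (akGraph k).Reachable (akW k i) (akU k) :=
    let ⟨j, hj⟩ := exists_akDigit_eq_false hk i
    (akGraph_adj_akV_akW hj).symm.reachable.trans (akV_reachable j)
  rcases a with (_ | j) | i | i
  · exact .rfl
  · exact akV_reachable j
  · exact akW_reachable i
  · exact (akGraph_adj_akW_akW' i).symm.reachable.trans (akW_reachable i)

theorem akGraph_preconnected (hk : 2 ≤ k) : (akGraph k).Preconnected := fun a b =>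
  (akGraph_reachable_akU hk a).trans (akGraph_reachable_akU hk b).symm

/-- A lower bound for the distance in `A_k` to the leaf `w'_i`. It is not sharp at `w_l` and `w'_l`
for `l ≠ i`, where the distance depends on whether `w_i` and `w_l` have a common neighbour. -/
def akDistLowerBound (k : ℕ) (i : Fin (akM k)) : AkVert k → ℕ
  | .inl (.inl _) => 3
  | .inl (.inr j) => if akDigit k j i then 4 else 2
  | .inr (.inl l) => if l = i then 1 else 3
  | .inr (.inr l) => if l = i then 0 else 4

theorem akDistLowerBound_le_add_one_of_adj {a b : AkVert k} (h : (akGraph k).Adj a b) :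
    akDistLowerBound k i a ≤ akDistLowerBound k i b + 1 := by
  refine And.left (b := akDistLowerBound k i b ≤ akDistLowerBound k i a + 1) ?_
  refine akGraph_adj_induction
    (P := fun a b => akDistLowerBound k i a ≤ akDistLowerBound k i b + 1 ∧
      akDistLowerBound k i b ≤ akDistLowerBound k i a + 1) (fun _ _ => And.symm) ?_ ?_ ?_ h
  · intro j
    simp only [akDistLowerBound, akU, akV]
    split_ifs <;> lia
  · intro j l hjl
    simp only [akDistLowerBound, akV, akW]
    rcases eq_or_ne l i with rfl | hli
    · simp [hjl]
    · simp only [hli, if_false]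
      split_ifs <;> lia
  · intro l
    simp only [akDistLowerBound, akW, akW']
    split_ifs <;> lia

theorem akDistLowerBound_le_dist (hk : 2 ≤ k) (i : Fin (akM k)) (a : AkVert k) :
    akDistLowerBound k i a ≤ (akGraph k).dist a (akW' k i) := by
  have h := le_add_dist_of_forall_adj (fun _ _ => akDistLowerBound_le_add_one_of_adj (i := i))
    (akGraph_preconnected hk a (akW' k i))
  simpa [akDistLowerBound, akW'] using h

theorem dist_akW_akW'_self (i : Fin (akM k)) : (akGraph k).dist (akW k i) (akW' k i) = 1 :=
  dist_eq_one_iff_adj.2 (akGraph_adj_akW_akW' i)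

theorem three_le_dist_akW_akW' (hk : 2 ≤ k) (hil : i ≠ l) :
    3 ≤ (akGraph k).dist (akW k l) (akW' k i) := by
  simpa [akDistLowerBound, akW, hil.symm] using akDistLowerBound_le_dist hk i (akW k l)

theorem four_le_dist_akV_akW' (hk : 2 ≤ k) (hji : akDigit k j i = true) :
    4 ≤ (akGraph k).dist (akV k j) (akW' k i) := by
  simpa [akDistLowerBound, akV, hji] using akDistLowerBound_le_dist hk i (akV k j)

theorem dist_akV_akW'_of_akDigit_eq_false (hk : 2 ≤ k) (hji : akDigit k j i = false) :
    (akGraph k).dist (akV k j) (akW' k i) = 2 := by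
  apply le_antisymm
  · calc
      (akGraph k).dist (akV k j) (akW' k i) ≤ (akGraph k).dist (akW k i) (akW' k i) + 1 :=
        dist_le_dist_add_one_of_adj (akGraph_adj_akV_akW hji)
      _ = 2 := by rw [dist_akW_akW'_self]
  · simpa [akDistLowerBound, akV, hji] using akDistLowerBound_le_dist hk i (akV k j)

theorem dist_akU_akW' (hk : 2 ≤ k) (i : Fin (akM k)) :
    (akGraph k).dist (akU k) (akW' k i) = 3 := by
  apply le_antisymm
  · obtain ⟨j, hj⟩ := exists_akDigit_eq_false hk i
    calc
      (akGraph k).dist (akU k) (akW' k i) ≤ (akGraph k).dist (akV k j) (akW' k i) + 1 :=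
        dist_le_dist_add_one_of_adj (akGraph_adj_akU_akV j)
      _ = 3 := by rw [dist_akV_akW'_of_akDigit_eq_false hk hj]
  · simpa [akDistLowerBound, akU] using akDistLowerBound_le_dist hk i (akU k)

end AkGraph

section AkEdges

variable {k : ℕ} {j j' : Fin k} {i l l' : Fin (akM k)}

/-- The edge `u v_{j+1}` of `A_k`, as a vertex of `L(A_k)`. -/
def uvEdge (k : ℕ) (j : Fin k) : (akGraph k).edgeSet :=
  ⟨s(akU k, akV k j), akGraph_adj_akU_akV j⟩

/-- The edge `v_{j+1} w_i` of `A_k`, as a vertex of `L(A_k)`. -/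
def vwEdge (h : akDigit k j i = false) : (akGraph k).edgeSet :=
  ⟨s(akV k j, akW k i), akGraph_adj_akV_akW h⟩

/-- The pendant edge `w_i w'_i` of `A_k`, as a vertex of `L(A_k)`. -/
def pendantEdge (k : ℕ) (i : Fin (akM k)) : (akGraph k).edgeSet :=
  ⟨s(akW k i, akW' k i), akGraph_adj_akW_akW' i⟩

theorem akGraph_edge_cases (e : (akGraph k).edgeSet) :
    (∃ j, e = uvEdge k j) ∨ (∃ j i, ∃ h : akDigit k j i = false, e = vwEdge h) ∨
      ∃ i, e = pendantEdge k i := by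
  obtain ⟨⟨a, b⟩, hab⟩ := e
  simp only [uvEdge, vwEdge, pendantEdge, Subtype.ext_iff]
  refine akGraph_adj_induction (P := fun a b => (∃ j, s(a, b) = s(akU k, akV k j)) ∨
    (∃ j i, ∃ _ : akDigit k j i = false, s(a, b) = s(akV k j, akW k i)) ∨
    ∃ i, s(a, b) = s(akW k i, akW' k i)) ?_ ?_ ?_ ?_ hab
  · intro a b h
    rwa [Sym2.eq_swap]
  · exact fun j => .inl ⟨j, rfl⟩
  · exact fun j i h => .inr (.inl ⟨j, i, h, rfl⟩)
  · exact fun i => .inr (.inr ⟨i, rfl⟩)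

theorem setOf_coe_eq_pendant_eq_range :
    {e : (akGraph k).edgeSet | ∃ i, (e : Sym2 (AkVert k)) = s(akW k i, akW' k i)} =
      Set.range (pendantEdge k) := by
  ext e
  exact exists_congr fun i => ⟨fun h => Subtype.ext h.symm, fun h => congrArg Subtype.val h.symm⟩

theorem lineGraph_dist_pendantEdge (hk : 2 ≤ k) {a b : AkVert k} (hab : (akGraph k).Adj a b)
    (i : Fin (akM k)) :
    (akGraph k).lineGraph.dist ⟨s(a, b), hab⟩ (pendantEdge k i) =
      min ((akGraph k).dist a (akW' k i)) ((akGraph k).dist b (akW' k i)) :=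
  lineGraph_dist_pendant hab (akGraph_adj_akW_akW' i) (fun _ => eq_akW_of_adj_akW')
    (akGraph_preconnected hk _ _)

theorem dist_uvEdge_pendantEdge (hk : 2 ≤ k) (j : Fin k) (i : Fin (akM k)) :
    (akGraph k).lineGraph.dist (uvEdge k j) (pendantEdge k i) =
      if akDigit k j i then 3 else 2 := by
  rw [uvEdge, lineGraph_dist_pendantEdge hk, dist_akU_akW' hk]
  cases hji : akDigit k j i
  · simp [dist_akV_akW'_of_akDigit_eq_false hk hji]
  · have := four_le_dist_akV_akW' hk hji
    simp only [if_true]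
    lia

theorem dist_vwEdge_pendantEdge_self (hk : 2 ≤ k) (hjl : akDigit k j l = false) :
    (akGraph k).lineGraph.dist (vwEdge hjl) (pendantEdge k l) = 1 := by
  simp [vwEdge, lineGraph_dist_pendantEdge hk, dist_akV_akW'_of_akDigit_eq_false hk hjl,
    dist_akW_akW'_self]

theorem dist_vwEdge_pendantEdge_of_akDigit_eq_false (hk : 2 ≤ k) (hjl : akDigit k j l = false)
    (hil : i ≠ l) (hji : akDigit k j i = false) :
    (akGraph k).lineGraph.dist (vwEdge hjl) (pendantEdge k i) = 2 := by
  have := three_le_dist_akW_akW' hk hil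
  rw [vwEdge, lineGraph_dist_pendantEdge hk, dist_akV_akW'_of_akDigit_eq_false hk hji]
  lia

theorem three_le_dist_vwEdge_pendantEdge (hk : 2 ≤ k) (hjl : akDigit k j l = false)
    (hji : akDigit k j i = true) :
    3 ≤ (akGraph k).lineGraph.dist (vwEdge hjl) (pendantEdge k i) := by
  have hil : i ≠ l := by
    rintro rfl
    simp [hjl] at hji
  rw [vwEdge, lineGraph_dist_pendantEdge hk]
  exact le_min ((four_le_dist_akV_akW' hk hji).trans' (by lia)) (three_le_dist_akW_akW' hk hil)

theorem dist_vwEdge_pendantEdge_eq_two_iff (hk : 2 ≤ k) (hjl : akDigit k j l = false)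
    (hil : i ≠ l) : (akGraph k).lineGraph.dist (vwEdge hjl) (pendantEdge k i) = 2 ↔
      akDigit k j i = false := by
  refine ⟨fun h_two => ?_, dist_vwEdge_pendantEdge_of_akDigit_eq_false hk hjl hil⟩
  by_contra hji
  have := three_le_dist_vwEdge_pendantEdge hk hjl (Bool.eq_true_of_not_eq_false hji)
  lia

theorem two_le_dist_vwEdge_pendantEdge (hk : 2 ≤ k) (hjl : akDigit k j l = false) (hil : i ≠ l) :
    2 ≤ (akGraph k).lineGraph.dist (vwEdge hjl) (pendantEdge k i) := by
  cases hji : akDigit k j i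
  · exact (dist_vwEdge_pendantEdge_of_akDigit_eq_false hk hjl hil hji).ge
  · exact (three_le_dist_vwEdge_pendantEdge hk hjl hji).trans' (by lia)

theorem dist_pendantEdge_pendantEdge (hk : 2 ≤ k) (hil : i ≠ l) :
    (akGraph k).lineGraph.dist (pendantEdge k l) (pendantEdge k i) =
      (akGraph k).dist (akW k l) (akW' k i) := by
  have hne : akW' k l ≠ akW' k i := by simpa [akW'] using hil.symm
  rw [pendantEdge, lineGraph_dist_pendantEdge hk]
  exact min_eq_left (dist_lt_dist_of_forall_adj_eq (fun _ => eq_akW_of_adj_akW')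
    (akGraph_preconnected hk _ _) hne).le

theorem three_le_dist_pendantEdge_pendantEdge (hk : 2 ≤ k) (hil : i ≠ l) :
    3 ≤ (akGraph k).lineGraph.dist (pendantEdge k l) (pendantEdge k i) :=
  dist_pendantEdge_pendantEdge hk hil ▸ three_le_dist_akW_akW' hk hil

theorem dist_vwEdge_le_dist_pendantEdge (hk : 2 ≤ k) (hjl : akDigit k j l = false) (hil : i ≠ l) :
    (akGraph k).lineGraph.dist (vwEdge hjl) (pendantEdge k i) ≤
      (akGraph k).lineGraph.dist (pendantEdge k l) (pendantEdge k i) := by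
  rw [dist_pendantEdge_pendantEdge hk hil, vwEdge, lineGraph_dist_pendantEdge hk]
  exact min_le_right _ _

end AkEdges

section DistTranslate

variable {k : ℕ} {j j' : Fin k} {l l' : Fin (akM k)}

-- Both profiles take values in `{2, 3}` and attain `3`, so the shift is `0`.
theorem eq_of_isDistTranslate_uvEdge_uvEdge (hk : 2 ≤ k)
    (h : IsDistTranslate (akGraph k).lineGraph (pendantEdge k) (uvEdge k j) (uvEdge k j')) :
    j = j' := by
  obtain ⟨c, hc⟩ := h
  simp only [dist_uvEdge_pendantEdge hk] at hc
  have hc_nonneg : 0 ≤ c := by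
    obtain ⟨i, hi⟩ := exists_akDigit_eq_true j
    grind
  have hc_nonpos : c ≤ 0 := by
    obtain ⟨i, hi⟩ := exists_akDigit_eq_true j'
    grind
  refine akDigit_injective (funext fun i => ?_)
  grind

theorem not_isDistTranslate_uvEdge_vwEdge (hk : 2 ≤ k) (hjl : akDigit k j' l = false) :
    ¬ IsDistTranslate (akGraph k).lineGraph (pendantEdge k) (uvEdge k j) (vwEdge hjl) := by
  rintro ⟨c, hc⟩
  simp only [dist_uvEdge_pendantEdge hk] at hc
  have hc_pos : 0 < c := by
    have h_one := dist_vwEdge_pendantEdge_self hk hjl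
    grind
  obtain ⟨i, hi⟩ := exists_akDigit_eq_true j'
  have h_three := three_le_dist_vwEdge_pendantEdge hk hjl hi
  have h_i := hc i
  split_ifs at h_i <;> lia

theorem not_isDistTranslate_uvEdge_pendantEdge (hk : 2 ≤ k) :
    ¬ IsDistTranslate (akGraph k).lineGraph (pendantEdge k) (uvEdge k j) (pendantEdge k l) := by
  rintro ⟨c, hc⟩
  simp only [dist_uvEdge_pendantEdge hk] at hc
  have hc_pos : 0 < c := by
    have h_zero : (akGraph k).lineGraph.dist (pendantEdge k l) (pendantEdge k l) = 0 := dist_self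
    grind
  obtain ⟨i, hil⟩ := exists_ne_index hk l
  have h_three := three_le_dist_pendantEdge_pendantEdge hk hil
  have h_i := hc i
  split_ifs at h_i <;> lia

-- Each profile has its strict minimum `1` at its own index.
theorem index_eq_of_isDistTranslate_vwEdge_vwEdge (hk : 2 ≤ k) (hjl : akDigit k j l = false)
    (hjl' : akDigit k j' l' = false)
    (h : IsDistTranslate (akGraph k).lineGraph (pendantEdge k) (vwEdge hjl) (vwEdge hjl')) :
    l = l' := by
  obtain ⟨c, hc⟩ := h
  by_contra hne
  have hc_neg : c < 0 := by
    have := hc l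
    have := dist_vwEdge_pendantEdge_self hk hjl
    have := two_le_dist_vwEdge_pendantEdge hk hjl' hne
    lia
  have hc_pos : 0 < c := by
    have := hc l'
    have := dist_vwEdge_pendantEdge_self hk hjl'
    have := two_le_dist_vwEdge_pendantEdge hk hjl (Ne.symm hne)
    lia
  exact hc_neg.not_gt hc_pos

theorem eq_of_isDistTranslate_vwEdge_vwEdge (hk : 2 ≤ k) (hjl : akDigit k j l = false)
    (hjl' : akDigit k j' l = false)
    (h : IsDistTranslate (akGraph k).lineGraph (pendantEdge k) (vwEdge hjl) (vwEdge hjl')) :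
    j = j' := by
  obtain ⟨c, hc⟩ := h
  have hc_zero : c = 0 := by
    simpa [dist_vwEdge_pendantEdge_self hk] using hc l
  refine akDigit_injective (funext fun i => ?_)
  rcases eq_or_ne i l with rfl | hil
  · rw [hjl, hjl']
  · rw [Bool.eq_iff_iff, ← not_iff_not, Bool.not_eq_true, Bool.not_eq_true,
      ← dist_vwEdge_pendantEdge_eq_two_iff hk hjl hil,
      ← dist_vwEdge_pendantEdge_eq_two_iff hk hjl' hil]
    have := hc i
    lia

theorem not_isDistTranslate_vwEdge_pendantEdge (hk : 2 ≤ k) (hjl : akDigit k j l = false) :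
    ¬ IsDistTranslate (akGraph k).lineGraph (pendantEdge k) (vwEdge hjl) (pendantEdge k l') := by
  rintro ⟨c, hc⟩
  have h_one := dist_vwEdge_pendantEdge_self hk hjl
  have h_zero : (akGraph k).lineGraph.dist (pendantEdge k l') (pendantEdge k l') = 0 := dist_self
  rcases eq_or_ne l l' with rfl | hne
  · obtain ⟨i, hil⟩ := exists_ne_index hk l
    have h_le := dist_vwEdge_le_dist_pendantEdge hk hjl hil
    have := hc l
    have := hc i
    lia
  · have h_three := three_le_dist_pendantEdge_pendantEdge hk hne
    have := hc l
    have := hc l'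
    lia

theorem eq_of_isDistTranslate_pendantEdge_pendantEdge (hk : 2 ≤ k)
    (h : IsDistTranslate (akGraph k).lineGraph (pendantEdge k) (pendantEdge k l)
      (pendantEdge k l')) : l = l' := by
  obtain ⟨c, hc⟩ := h
  by_contra hne
  have h_three := three_le_dist_pendantEdge_pendantEdge hk hne
  have h_l := hc l
  have h_l' := hc l'
  rw [dist_self] at h_l h_l'
  lia

end DistTranslate

/-- For every integer `k ≥ 2`, the set
`S = {w_0 w'_0, …, w_{m-1} w'_{m-1}}` of the `m` pendant edges of `A_k`, viewed as a set of
vertices of the line graph `L(A_k)`, is a doubly resolving set of `L(A_k)`. -/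
theorem pendantEdges_isDRS_lineGraph_akGraph (k : ℕ) (hk : 2 ≤ k) :
    IsDoublyResolvingSet (akGraph k).lineGraph
      {e : (akGraph k).edgeSet |
        ∃ i : Fin (akM k), (e : Sym2 (AkVert k)) = s(akW k i, akW' k i)} := by
  rw [setOf_coe_eq_pendant_eq_range, isDoublyResolvingSet_range_iff]
  intro e f h
  rcases akGraph_edge_cases e with ⟨j, rfl⟩ | ⟨j, l, hjl, rfl⟩ | ⟨l, rfl⟩ <;>
    rcases akGraph_edge_cases f with ⟨j', rfl⟩ | ⟨j', l', hjl', rfl⟩ | ⟨l', rfl⟩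
  · rw [eq_of_isDistTranslate_uvEdge_uvEdge hk h]
  · exact (not_isDistTranslate_uvEdge_vwEdge hk hjl' h).elim
  · exact (not_isDistTranslate_uvEdge_pendantEdge hk h).elim
  · exact (not_isDistTranslate_uvEdge_vwEdge hk hjl h.symm).elim
  · obtain rfl := index_eq_of_isDistTranslate_vwEdge_vwEdge hk hjl hjl' h
    obtain rfl := eq_of_isDistTranslate_vwEdge_vwEdge hk hjl hjl' h
    rfl
  · exact (not_isDistTranslate_vwEdge_pendantEdge hk hjl h).elim
  · exact (not_isDistTranslate_uvEdge_pendantEdge hk h.symm).elim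
  · exact (not_isDistTranslate_vwEdge_pendantEdge hk hjl' h.symm).elim
  · rw [eq_of_isDistTranslate_pendantEdge_pendantEdge hk h]
end

section
/- For every integer k ≥ 1, the friendship graph T_k satisfies Ψ(L(T_k)) = 2k = |V(T_k)| − 1, where Ψ(L(T_k)) is the minimum cardinality of a doubly resolving set of the line graph L(T_k). -/
open SimpleGraph

variable {V : Type*}

/-- The vertex set of the friendship graph `T_k`: the center `u` together with the
vertices `x_i = (i, false)` and `y_i = (i, true)` for `1 ≤ i ≤ k`. -/
abbrev FriendVert (k : ℕ) : Type := Unit ⊕ (Fin k × Bool)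

/-- The center vertex `u` of the friendship graph. -/
def fkU (k : ℕ) : FriendVert k := Sum.inl ()

/-- The vertex `x_i` of the friendship graph. -/
def fkX (k : ℕ) (i : Fin k) : FriendVert k := Sum.inr (i, false)

/-- The vertex `y_i` of the friendship graph. -/
def fkY (k : ℕ) (i : Fin k) : FriendVert k := Sum.inr (i, true)

/-- The friendship graph `T_k`, obtained by gluing `k` triangles at the vertex `u`:
its edges are `u x_i`, `u y_i` and `x_i y_i` for `1 ≤ i ≤ k`. -/
def friendshipGraph (k : ℕ) : SimpleGraph (FriendVert k) := SimpleGraph.fromRel (fun a b =>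
  (∃ i : Fin k, a = fkU k ∧ b = fkX k i) ∨
  (∃ i : Fin k, a = fkU k ∧ b = fkY k i) ∨
  (∃ i : Fin k, a = fkX k i ∧ b = fkY k i))

/-!
The line graph of `T_k` consists of a clique on the `2k` spokes `u x_i`, `u y_i`, together with `k`
rims `x_i y_i`, the `i`-th rim being adjacent to the two spokes of its triangle only. A set `S` is
doubly resolving iff no difference `d(e, ·) - d(f, ·)` with `e ≠ f` is constant on `S`.

Within the `i`-th triangle, `d(u x_i, ·) - d(u y_i, ·)` vanishes off these two spokes, and
`d(x_i y_i, ·) - d(u x_i, ·)` equals `1` off `{x_i y_i, u y_i}`. Hence `S` meets every pair of edges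
of a triangle, so it misses at most one edge per triangle and `|S| ≥ 3k - k`. Conversely, the
distances to the `2k` spokes separate all edges, even up to an additive constant.
-/

theorem isDoublyResolvingSet_iff_forall_dist_eq_add {G : SimpleGraph V} {S : Set V} :
    IsDoublyResolvingSet G S ↔
      ∀ u v (c : ℤ), (∀ x ∈ S, (G.dist u x : ℤ) = G.dist v x + c) → u = v := by
  refine ⟨fun hS u v c hc ↦ ?_, fun h u v huv ↦ ?_⟩
  · by_contra huv
    obtain ⟨x, hx, y, hy, hne⟩ := hS u v huv
    have hcx := hc x hx
    have hcy := hc y hy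
    omega
  · by_contra! hS
    rcases S.eq_empty_or_nonempty with rfl | ⟨y, hy⟩
    · exact huv (h u v 0 (by simp))
    · refine huv (h u v (G.dist u y - G.dist v y) fun x hx ↦ ?_)
      have hxy := hS x hx y hy
      omega

theorem dist_eq_add_one_of_forall_adj {G : SimpleGraph V} {v w : V} {n : ℕ}
    (hreach : G.Reachable v w) (hne : v ≠ w) (h : ∀ x, G.Adj v x → G.dist x w = n) :
    G.dist v w = n + 1 := by
  obtain ⟨p, hp⟩ := hreach.exists_walk_length_eq_dist
  cases p with
  | nil => exact absurd rfl hne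
  | @cons _ x _ hvx p =>
    have hlower : n ≤ p.length := h x hvx ▸ dist_le p
    have hupper : G.dist v w ≤ 1 + n := by
      calc G.dist v w ≤ G.dist v x + G.dist x w := hvx.reachable.dist_triangle_left w
        _ = 1 + n := by rw [dist_eq_one_iff_adj.2 hvx, h x hvx]
    rw [Walk.length_cons] at hp
    omega

namespace friendshipGraph

variable {k : ℕ}

/-- The edge of `T_k` joining the center to the vertex `x_i` (for `p = (i, false)`) or `y_i`
(for `p = (i, true)`). -/
def spoke (p : Fin k × Bool) : (friendshipGraph k).edgeSet :=
  ⟨s(fkU k, Sum.inr p), by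
    rcases p with ⟨i, _ | _⟩ <;> simp [friendshipGraph, fkU, fkX, fkY]⟩

/-- The edge `x_i y_i` of `T_k`, opposite to the center in the `i`-th triangle. -/
def rim (i : Fin k) : (friendshipGraph k).edgeSet :=
  ⟨s(fkX k i, fkY k i), by simp [friendshipGraph, fkU, fkX, fkY]⟩

theorem spoke_injective : Function.Injective (spoke (k := k)) := fun p q h ↦ by
  simpa [spoke, fkU] using h

theorem rim_injective : Function.Injective (rim (k := k)) := fun i j h ↦ by
  simpa [rim, fkX, fkY] using h

theorem spoke_ne_rim (p : Fin k × Bool) (i : Fin k) : spoke p ≠ rim i := by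
  simp [spoke, rim, fkU, fkX, fkY]

theorem eq_spoke_or_eq_rim (e : (friendshipGraph k).edgeSet) :
    (∃ p, e = spoke p) ∨ ∃ i, e = rim i := by
  obtain ⟨s, hs⟩ := e
  induction s using Sym2.ind with
  | _ a b =>
    wlog hab : (∃ i, a = fkU k ∧ b = fkX k i) ∨ (∃ i, a = fkU k ∧ b = fkY k i) ∨
        ∃ i, a = fkX k i ∧ b = fkY k i generalizing a b
    · have hba := ((fromRel_adj _ a b).1 ((mem_edgeSet _).1 hs)).2.resolve_left hab
      simpa only [Sym2.eq_swap (a := a)] using this b a (Sym2.eq_swap ▸ hs) hba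
    rcases hab with ⟨i, rfl, rfl⟩ | ⟨i, rfl, rfl⟩ | ⟨i, rfl, rfl⟩
    · exact .inl ⟨(i, false), rfl⟩
    · exact .inl ⟨(i, true), rfl⟩
    · exact .inr ⟨i, rfl⟩

/-- The edges of `T_k` enumerated as `2k` spokes and `k` rims. -/
noncomputable def edgeEquiv (k : ℕ) : (Fin k × Bool) ⊕ Fin k ≃ (friendshipGraph k).edgeSet :=
  Equiv.ofBijective (Sum.elim spoke rim)
    ⟨spoke_injective.sumElim rim_injective spoke_ne_rim, fun e ↦ by
      rcases eq_spoke_or_eq_rim e with ⟨p, rfl⟩ | ⟨i, rfl⟩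
      · exact ⟨.inl p, rfl⟩
      · exact ⟨.inr i, rfl⟩⟩

theorem card_edgeSet : Nat.card (friendshipGraph k).edgeSet = 2 * k + k := by
  rw [← Nat.card_congr (edgeEquiv k)]
  simp [mul_comm]

/-- The index of the triangle of `T_k` containing a given edge. -/
noncomputable def triangleIndex (e : (friendshipGraph k).edgeSet) : Fin k :=
  Sum.elim Prod.fst id ((edgeEquiv k).symm e)

@[simp]
theorem triangleIndex_spoke (p : Fin k × Bool) : triangleIndex (spoke p) = p.1 :=
  congrArg (Sum.elim Prod.fst id) ((edgeEquiv k).symm_apply_apply (.inl p))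

@[simp]
theorem triangleIndex_rim (i : Fin k) : triangleIndex (rim i) = i :=
  congrArg (Sum.elim Prod.fst id) ((edgeEquiv k).symm_apply_apply (.inr i))

theorem lineGraph_adj_spoke_spoke {p q : Fin k × Bool} (h : p ≠ q) :
    (friendshipGraph k).lineGraph.Adj (spoke p) (spoke q) :=
  lineGraph_adj_iff_exists.2 ⟨spoke_injective.ne h, fkU k, by simp [spoke]⟩

theorem lineGraph_adj_rim_iff {i : Fin k} {e : (friendshipGraph k).edgeSet} :
    (friendshipGraph k).lineGraph.Adj (rim i) e ↔ ∃ b, e = spoke (i, b) := by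
  rw [lineGraph_adj_iff_exists]
  rcases eq_spoke_or_eq_rim e with ⟨⟨j, b⟩, rfl⟩ | ⟨j, rfl⟩
  · cases b <;> simp [spoke, rim, fkU, fkX, fkY, eq_comm (a := i)]
  · simp +contextual [spoke, rim, fkU, fkX, fkY]

theorem lineGraph_reachable_rim_spoke (i : Fin k) (p : Fin k × Bool) :
    (friendshipGraph k).lineGraph.Reachable (rim i) (spoke p) := by
  have hrim := (lineGraph_adj_rim_iff.2 ⟨p.2, rfl⟩ :
    (friendshipGraph k).lineGraph.Adj (rim i) (spoke (i, p.2))).reachable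
  by_cases hp : (i, p.2) = p
  · rwa [hp] at hrim
  · exact hrim.trans (lineGraph_adj_spoke_spoke hp).reachable

theorem dist_spoke_spoke (p q : Fin k × Bool) :
    (friendshipGraph k).lineGraph.dist (spoke p) (spoke q) = if p = q then 0 else 1 := by
  split_ifs with h
  · rw [h, dist_self]
  · exact dist_eq_one_iff_adj.2 (lineGraph_adj_spoke_spoke h)

theorem dist_rim_spoke (i : Fin k) (p : Fin k × Bool) :
    (friendshipGraph k).lineGraph.dist (rim i) (spoke p) = if i = p.1 then 1 else 2 := by
  split_ifs with h
  · exact dist_eq_one_iff_adj.2 (lineGraph_adj_rim_iff.2 ⟨p.2, h ▸ rfl⟩)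
  · refine dist_eq_add_one_of_forall_adj (lineGraph_reachable_rim_spoke i p)
      (spoke_ne_rim p i).symm fun e he ↦ ?_
    obtain ⟨b, rfl⟩ := lineGraph_adj_rim_iff.1 he
    rw [dist_spoke_spoke, if_neg fun hp ↦ h (congrArg Prod.fst hp)]

theorem dist_spoke_rim (p : Fin k × Bool) (i : Fin k) :
    (friendshipGraph k).lineGraph.dist (spoke p) (rim i) = if i = p.1 then 1 else 2 := by
  rw [dist_comm, dist_rim_spoke]

theorem dist_rim_rim (i j : Fin k) :
    (friendshipGraph k).lineGraph.dist (rim i) (rim j) = if i = j then 0 else 3 := by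
  split_ifs with h
  · rw [h, dist_self]
  · have hreach : (friendshipGraph k).lineGraph.Reachable (rim i) (rim j) :=
      (lineGraph_reachable_rim_spoke i (i, true)).trans
        (lineGraph_reachable_rim_spoke j (i, true)).symm
    refine dist_eq_add_one_of_forall_adj hreach (rim_injective.ne h) fun e he ↦ ?_
    obtain ⟨b, rfl⟩ := lineGraph_adj_rim_iff.1 he
    rw [dist_spoke_rim, if_neg (Ne.symm h)]

section LowerBound

variable {S : Set (friendshipGraph k).edgeSet}

theorem spoke_mem_or_spoke_mem (hS : IsDoublyResolvingSet (friendshipGraph k).lineGraph S)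
    (i : Fin k) : spoke (i, false) ∈ S ∨ spoke (i, true) ∈ S := by
  by_contra! ⟨hfalse, htrue⟩
  have hspokes : spoke (i, false) = spoke (i, true) := by
    refine isDoublyResolvingSet_iff_forall_dist_eq_add.1 hS _ _ 0 fun e he ↦ ?_
    rcases eq_spoke_or_eq_rim e with ⟨p, rfl⟩ | ⟨j, rfl⟩
    · have hpfalse : (i, false) ≠ p := fun h ↦ hfalse (h ▸ he)
      have hptrue : (i, true) ≠ p := fun h ↦ htrue (h ▸ he)
      simp [dist_spoke_spoke, hpfalse, hptrue]
    · simp [dist_spoke_rim]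
  simpa using spoke_injective hspokes

theorem rim_mem_or_spoke_mem (hS : IsDoublyResolvingSet (friendshipGraph k).lineGraph S)
    (i : Fin k) (b : Bool) : rim i ∈ S ∨ spoke (i, b) ∈ S := by
  by_contra! ⟨hrim, hspoke⟩
  refine spoke_ne_rim (i, !b) i (Eq.symm ?_)
  refine isDoublyResolvingSet_iff_forall_dist_eq_add.1 hS _ _ 1 fun e he ↦ ?_
  rcases eq_spoke_or_eq_rim e with ⟨⟨j, c⟩, rfl⟩ | ⟨j, rfl⟩
  · rw [dist_rim_spoke, dist_spoke_spoke]
    have hc : i = j → c = !b := by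
      rintro rfl
      exact Bool.eq_not.2 fun hcb ↦ hspoke (hcb ▸ he)
    grind
  · have hij : i ≠ j := fun h ↦ hrim (h ▸ he)
    simp [dist_rim_rim, dist_spoke_rim, hij, hij.symm]

theorem injOn_triangleIndex_compl (hS : IsDoublyResolvingSet (friendshipGraph k).lineGraph S) :
    Set.InjOn triangleIndex Sᶜ := by
  intro e he f hf hef
  rcases eq_spoke_or_eq_rim e with ⟨⟨i, b⟩, rfl⟩ | ⟨i, rfl⟩ <;>
    rcases eq_spoke_or_eq_rim f with ⟨⟨j, c⟩, rfl⟩ | ⟨j, rfl⟩ <;>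
    simp only [triangleIndex_spoke, triangleIndex_rim] at hef <;> subst hef
  · have hspokes := spoke_mem_or_spoke_mem hS i
    cases b <;> cases c <;> simp_all
  · exact ((rim_mem_or_spoke_mem hS i b).elim hf he).elim
  · exact ((rim_mem_or_spoke_mem hS i c).elim he hf).elim
  · rfl

theorem two_mul_le_ncard_of_isDoublyResolvingSet
    (hS : IsDoublyResolvingSet (friendshipGraph k).lineGraph S) :
    2 * k ≤ S.ncard := by
  have hcompl : Sᶜ.ncard ≤ k := by
    simpa using Set.ncard_le_ncard_of_injOn (t := Set.univ) triangleIndex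
      (fun _ _ ↦ Set.mem_univ _) (injOn_triangleIndex_compl hS)
  have hcard : S.ncard + Sᶜ.ncard = 2 * k + k := by
    rw [Set.ncard_add_ncard_compl, card_edgeSet]
  omega

end LowerBound

theorem isDoublyResolvingSet_range_spoke :
    IsDoublyResolvingSet (friendshipGraph k).lineGraph (Set.range spoke) := by
  rw [isDoublyResolvingSet_iff_forall_dist_eq_add]
  intro e f c hc
  replace hc p := hc (spoke p) (Set.mem_range_self p)
  rcases eq_spoke_or_eq_rim e with ⟨p, rfl⟩ | ⟨i, rfl⟩ <;>
    rcases eq_spoke_or_eq_rim f with ⟨q, rfl⟩ | ⟨j, rfl⟩ <;>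
    simp only [dist_spoke_spoke, dist_rim_spoke] at hc
  · have hp := hc p
    have hq := hc q
    grind
  -- A rim is equidistant from the two spokes of any triangle; a spoke of that triangle is not.
  · have hp := hc p
    have hp' := hc (p.1, !p.2)
    grind
  · have hq := hc q
    have hq' := hc (q.1, !q.2)
    grind
  · have hi := hc (i, true)
    have hj := hc (j, true)
    grind

theorem ncard_range_spoke : (Set.range (spoke (k := k))).ncard = 2 * k := by
  rw [Set.ncard_range_of_injective spoke_injective]
  simp [mul_comm]

end friendshipGraph

/-- For every integer `k ≥ 1`, the friendship graph `T_k` satisfies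
`Ψ(L(T_k)) = 2k = |V(T_k)| - 1`. -/
theorem psi_lineGraph_friendshipGraph (k : ℕ) (hk : 1 ≤ k) :
    psi (friendshipGraph k).lineGraph = 2 * k ∧
      2 * k = Fintype.card (FriendVert k) - 1 := by
  have hleast : IsLeast {n | ∃ S, IsDoublyResolvingSet (friendshipGraph k).lineGraph S ∧
      S.ncard = n} (2 * k) :=
    ⟨⟨_, friendshipGraph.isDoublyResolvingSet_range_spoke, friendshipGraph.ncard_range_spoke⟩,
      fun _ ⟨_, hS, hn⟩ ↦ hn ▸ friendshipGraph.two_mul_le_ncard_of_isDoublyResolvingSet hS⟩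
  refine ⟨hleast.csInf_eq, ?_⟩
  simp [mul_comm]
end

section
/- Let G be a finite connected simple graph with at least two vertices, let S be a resolving set of G, let x ∈ S, and let T ⊆ V(G) be a doubly distance resolving set of G on x. Then S ∪ T is a doubly resolving set of G. -/
open SimpleGraph

variable {V : Type*}

/-- `S` is a resolving set of `G`. -/
def IsResolvingSet (G : SimpleGraph V) (S : Set V) : Prop :=
  ∀ u v : V, u ≠ v → ∃ x ∈ S, G.dist u x ≠ G.dist v x

/-- The pair `{x, y}` doubly resolves the pair `{u, v}` in `G`. -/
def DoublyResolves (G : SimpleGraph V) (x y u v : V) : Prop :=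
  (G.dist u x : ℤ) - (G.dist u y : ℤ) ≠ (G.dist v x : ℤ) - (G.dist v y : ℤ)

/-- `T` is a doubly distance resolving set of `G` on `x`: every pair of distinct vertices
at different distances from `x` is doubly resolved by some pair of vertices in `T ∪ {x}`. -/
def IsDoublyDistanceResolvingSet (G : SimpleGraph V) (x : V) (T : Set V) : Prop :=
  ∀ u v : V, u ≠ v → G.dist u x ≠ G.dist v x →
    ∃ a ∈ T ∪ {x}, ∃ b ∈ T ∪ {x}, DoublyResolves G a b u v

theorem doublyResolves_iff_dist_ne_of_dist_eq {G : SimpleGraph V} {x y u v : V}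
    (h : G.dist u y = G.dist v y) :
    DoublyResolves G x y u v ↔ G.dist u x ≠ G.dist v x := by
  rw [DoublyResolves, h, Ne, sub_left_inj, Nat.cast_inj]

theorem IsResolvingSet.exists_doublyResolves_of_dist_eq {G : SimpleGraph V} {S : Set V}
    (hS : IsResolvingSet G S) {x u v : V} (huv : u ≠ v) (h : G.dist u x = G.dist v x) :
    ∃ y ∈ S, DoublyResolves G y x u v := by
  obtain ⟨y, hyS, hy⟩ := hS u v huv
  exact ⟨y, hyS, (doublyResolves_iff_dist_ne_of_dist_eq h).mpr hy⟩

theorem resolvingSet_union_ddrs_isDRS_general {G : SimpleGraph V} {S T : Set V} {x : V}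
    (hS : IsResolvingSet G S) (hx : x ∈ S) (hT : IsDoublyDistanceResolvingSet G x T) :
    IsDoublyResolvingSet G (S ∪ T) := by
  intro u v huv
  by_cases hdist : G.dist u x = G.dist v x
  · obtain ⟨y, hyS, hyx⟩ := hS.exists_doublyResolves_of_dist_eq huv hdist
    exact ⟨y, Or.inl hyS, x, Or.inl hx, hyx⟩
  · have hsub : T ∪ {x} ⊆ S ∪ T :=
      Set.union_subset Set.subset_union_right (Set.singleton_subset_iff.mpr (Or.inl hx))
    obtain ⟨a, ha, b, hb, hab⟩ := hT u v huv hdist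
    exact ⟨a, hsub ha, b, hsub hb, hab⟩

/-- If `S` is a resolving set of `G`, `x ∈ S`, and `T` is a doubly distance
resolving set of `G` on `x`, then `S ∪ T` is a doubly resolving set of `G`. -/
theorem resolvingSet_union_ddrs_isDRS {V : Type*} [Fintype V] (G : SimpleGraph V)
    (hconn : G.Connected) (hcard : 2 ≤ Fintype.card V)
    (S : Set V) (hS : IsResolvingSet G S) (x : V) (hx : x ∈ S)
    (T : Set V) (hT : IsDoublyDistanceResolvingSet G x T) :
    IsDoublyResolvingSet G (S ∪ T) :=
  resolvingSet_union_ddrs_isDRS_general hS hx hT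
end
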